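/- arXiv:2409.02824 — 10 statements merged into one kernel-verified Lean document; each statement's English description precedes it below -/
import Mathlib

section
/- The bracket [·,·] on V is alternating ([x,x] = 0 for all x ∈ V) and satisfies the Jacobi identity [x,[y,z]] + [y,[z,x]] + [z,[x,y]] = 0 for all x, y, z ∈ V; hence it makes V into a Lie algebra over K. -/
/-!
The bracket is `K`-bilinear (`combBilin`), so both identities reduce to basis elements.
On these, `combBaseBracket` is antisymmetric and vanishes on the diagonal, so `[x, x] = 0` follows by
induction on `x`, the cross terms cancelling by antisymmetry. The basis Jacobi identity
(`combBilin_jacobi_single`) holds because each `ev ρ` is additive: every term is a multiple of some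
`χ^{u+v+w}·f_σ` with `σ` one of the three given rays, and the coefficient of each cancels.
-/

/-!
The combinatorial bracket on `V = ⊕_{ρ,u} K·χ^u·f_ρ`, defined on basis elements by
`[χ^u·f_ρ, χ^{u'}·f_{ρ'}] = ρ(u')·χ^{u+u'}·f_{ρ'} − ρ'(u)·χ^{u+u'}·f_ρ`,
is alternating and satisfies the Jacobi identity (hence makes `V` a Lie algebra over `K`).
-/

variable {K : Type*} [Field K] [CharZero K]
variable {M : Type*} [AddCommGroup M]
variable {R : Type*}

/-- The bracket of two basis elements `χ^u·f_ρ` (indexed by `p = (ρ, u)`) and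
`χ^{u'}·f_{ρ'}` (indexed by `q = (ρ', u')`). -/
noncomputable def combBaseBracket (ev : R → M →+ ℤ) (p q : R × M) : (R × M) →₀ K :=
  ((ev p.1 q.2 : ℤ) : K) • Finsupp.single (q.1, p.2 + q.2) 1
    - ((ev q.1 p.2 : ℤ) : K) • Finsupp.single (p.1, p.2 + q.2) 1

/-- The K-bilinear extension of `combBaseBracket` to all of `V = (R × M) →₀ K`. -/
noncomputable def combBracket (ev : R → M →+ ℤ) (x y : (R × M) →₀ K) : (R × M) →₀ K :=
  x.sum fun p c => y.sum fun q d => (c * d) • combBaseBracket ev p q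

/-- `combBracket` as a bundled bilinear map. -/
noncomputable def combBilin (ev : R → M →+ ℤ) :
    ((R × M) →₀ K) →ₗ[K] ((R × M) →₀ K) →ₗ[K] ((R × M) →₀ K) :=
  Finsupp.linearCombination K fun p => Finsupp.linearCombination K (combBaseBracket ev p)

theorem combBracket_eq_combBilin (ev : R → M →+ ℤ) (x y : (R × M) →₀ K) :
    combBracket ev x y = combBilin ev x y := by
  simp [combBracket, combBilin, Finsupp.linearCombination_apply, Finsupp.sum,
    LinearMap.sum_apply, Finset.smul_sum, mul_smul]

theorem combBilin_single (ev : R → M →+ ℤ) (p q : R × M) (c d : K) :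
    combBilin ev (Finsupp.single p c) (Finsupp.single q d) =
      Finsupp.single (q.1, p.2 + q.2) (c * d * (ev p.1 q.2 : K))
        - Finsupp.single (p.1, p.2 + q.2) (c * d * (ev q.1 p.2 : K)) := by
  simp [combBilin, combBaseBracket, smul_sub, mul_assoc, -Finsupp.single_mul]

theorem combBilin_antisymm (ev : R → M →+ ℤ) (x y : (R × M) →₀ K) :
    combBilin ev x y + combBilin ev y x = 0 := by
  induction x using Finsupp.induction_linear with
  | zero => simp
  | add f g hf hg =>
    simp only [map_add, LinearMap.add_apply]
    rw [add_add_add_comm, hf, hg, add_zero]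
  | single p c =>
    induction y using Finsupp.induction_linear with
    | zero => simp
    | add f g hf hg =>
      simp only [map_add, LinearMap.add_apply]
      rw [add_add_add_comm, hf, hg, add_zero]
    | single q d =>
      rw [combBilin_single, combBilin_single, add_comm q.2 p.2, mul_comm d c]
      abel

theorem combBilin_self (ev : R → M →+ ℤ) (x : (R × M) →₀ K) : combBilin ev x x = 0 := by
  induction x using Finsupp.induction_linear with
  | zero => simp
  | add f g hf hg =>
    simp only [map_add, LinearMap.add_apply, hf, hg, zero_add, add_zero]
    exact combBilin_antisymm ev g f
  | single p c => rw [combBilin_single, sub_self]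

theorem combBilin_jacobi_single (ev : R → M →+ ℤ) (p q r : R × M) (a b c : K) :
    combBilin ev (Finsupp.single p a) (combBilin ev (Finsupp.single q b) (Finsupp.single r c))
      + combBilin ev (Finsupp.single q b) (combBilin ev (Finsupp.single r c) (Finsupp.single p a))
      + combBilin ev (Finsupp.single r c) (combBilin ev (Finsupp.single p a) (Finsupp.single q b))
      = 0 := by
  obtain ⟨ρ, u⟩ := p
  obtain ⟨σ, v⟩ := q
  obtain ⟨τ, w⟩ := r
  have h₁ : v + (w + u) = u + (v + w) := by abel
  have h₂ : w + (u + v) = u + (v + w) := by abel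
  simp only [combBilin_single, map_sub, map_add, h₁, h₂, Int.cast_add]
  -- The rays may coincide, so coefficients are compared at an arbitrary index `i`.
  ext i
  simp only [Finsupp.add_apply, Finsupp.sub_apply, Finsupp.zero_apply]
  classical
  have h (k : R × M) (t : K) : Finsupp.single k t i = t * if k = i then 1 else 0 := by
    rw [Finsupp.single_apply, mul_ite, mul_one, mul_zero]
  simp only [h]
  ring

theorem combBilin_jacobi (ev : R → M →+ ℤ) (x y z : (R × M) →₀ K) :
    combBilin ev x (combBilin ev y z) + combBilin ev y (combBilin ev z x)
      + combBilin ev z (combBilin ev x y) = 0 := by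
  have regroup {a b c a' b' c' : (R × M) →₀ K} (h : a + b + c = 0) (h' : a' + b' + c' = 0) :
      a + a' + (b + b') + (c + c') = 0 := by
    rw [add_add_add_comm a a', add_add_add_comm, h, h', add_zero]
  induction x using Finsupp.induction_linear with
  | zero => simp
  | add f g hf hg =>
    simp only [map_add, LinearMap.add_apply]
    exact regroup hf hg
  | single p a =>
    induction y using Finsupp.induction_linear with
    | zero => simp
    | add f g hf hg =>
      simp only [map_add, LinearMap.add_apply]
      exact regroup hf hg
    | single q b =>
      induction z using Finsupp.induction_linear with
      | zero => simp
      | add f g hf hg =>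
        simp only [map_add, LinearMap.add_apply]
        exact regroup hf hg
      | single r c => exact combBilin_jacobi_single ev p q r a b c

/-- The bracket `[·,·]` on `V` is alternating and satisfies the Jacobi identity;
hence it makes `V` into a Lie algebra over `K`. -/
theorem combBracket_alternating_jacobi (ev : R → M →+ ℤ) :
    (∀ x : (R × M) →₀ K, combBracket ev x x = 0) ∧
    (∀ x y z : (R × M) →₀ K,
      combBracket ev x (combBracket ev y z) + combBracket ev y (combBracket ev z x)
        + combBracket ev z (combBracket ev x y) = 0) := by
  simp only [combBracket_eq_combBilin]
  exact ⟨combBilin_self ev, combBilin_jacobi ev⟩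
end

section
/- For every m ≥ 1, all ρ_1, …, ρ_m ∈ R and all v_1, …, v_m ∈ M, the iterated bracket [x_m x_{m−1} ⋯ x_1] := [x_m, [x_{m−1}, [⋯, [x_2, x_1]⋯]]] of the basis elements x_i = χ^{v_i}·f_{ρ_i} of V satisfies [χ^{v_m}·f_{ρ_m} ⋯ χ^{v_1}·f_{ρ_1}] = Σ_{k=1}^{m} ( Σ_{a ∈ Δ_{m,k}} sgn(a) · ∏_{1 ≤ i ≤ m, i ≠ k} ρ_i(v_{a_i}) ) · χ^{v_1+⋯+v_m}·f_{ρ_k}. -/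
/-!
Let `S_m = v_1 + ⋯ + v_m` and let `c_{m,k}` be the coefficient of `χ^{S_m}·f_{ρ_k}` on the
right-hand side (`bracketCoeff`).
Bracketing `Σ_k c_{m,k} χ^{S_m}·f_{ρ_k}` with `χ^{v_{m+1}}·f_{ρ_{m+1}}` shows that the formula
follows by induction from two recursions.

* For `k ≤ m`, `c_{m+1,k} = ρ_{m+1}(S_m) c_{m,k}` (`bracketCoeff_castSucc`): an element of
  `Δ_{m+1,k}` is an element of `Δ_{m,k}` followed by an arbitrary last entry in `{1,…,m}`.
* `c_{m+1,m+1} = -Σ_{k ≤ m} ρ_k(v_{m+1}) c_{m,k}` (`bracketCoeff_last`): `Δ_{m+1,m+1}` is the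
  disjoint union over `k ≤ m` of copies of `Δ_{m,k}`, where `b ∈ Δ_{m,k}` corresponds to the tuple
  `b` with its `k`-th entry `k` raised to `m+1`, followed by `m+1` (`raise`). The inverse takes for
  `k` the last position `i ≤ m` at which `a_i < i` fails; there the defining sum is empty, so
  `a_k = m+1`. Raising the entry adds `m+1-k` to the sums at positions `i < k`, which compensates
  for replacing `k` by `m+1` in the defining condition, and it changes the sign once.
-/

/-!
The explicit formula for iterated Lie brackets of basis elements of `V`
(Proposition 5.18 of the paper):
`[χ^{v_m}·f_{ρ_m} ⋯ χ^{v_1}·f_{ρ_1}]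
  = Σ_{k=1}^{m} ( Σ_{a ∈ Δ_{m,k}} sgn(a) · ∏_{i ≠ k} ρ_i(v_{a_i}) ) · χ^{v_1+⋯+v_m}·f_{ρ_k}`.

A tuple `a = (a_1,…,a_d)` of positive integers is encoded as a function
`a : Fin d → ℕ`, where the entry at paper-position `i` (for `1 ≤ i ≤ d`) is
`a ⟨i-1,_⟩`; i.e. the Lean index `i : Fin d` corresponds to paper index `(i:ℕ)+1`.
-/

variable {K : Type*} [Field K] [CharZero K]
variable {M : Type*} [AddCommGroup M]
variable {R : Type*}

/-- The iterated (right-nested) bracket `[x_{n+1}, [x_n, [⋯, [x_2, x_1]⋯]]]`, where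
`x : Fin (n+1) → V` and `x i` is the element at paper-position `(i:ℕ)+1`. -/
noncomputable def nestBracket (ev : R → M →+ ℤ) :
    (n : ℕ) → (Fin (n + 1) → ((R × M) →₀ K)) → ((R × M) →₀ K)
  | 0, x => x 0
  | n + 1, x => combBracket ev (x (Fin.last (n + 1))) (nestBracket ev n fun i => x i.castSucc)

/-- Membership predicate for `Δ_{d,k}` (paper-positions are `(i:ℕ)+1` for `i : Fin d`):
`a_k = k`; `a_i < i` for `i > k`; and for `i < k`, either `a_i < i` or
`a_i = k − Σ_{j > i, a_j > j} (a_j − j)`. -/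
def memDelta (d k : ℕ) (a : Fin d → ℕ) : Prop :=
  (∀ i : Fin d, (i : ℕ) + 1 = k → a i = k) ∧
  (∀ i : Fin d, k < (i : ℕ) + 1 → a i < (i : ℕ) + 1) ∧
  (∀ i : Fin d, (i : ℕ) + 1 < k →
    (a i < (i : ℕ) + 1 ∨
      (a i : ℤ) = (k : ℤ) -
        ∑ j ∈ Finset.univ.filter
            (fun j : Fin d => (i : ℕ) < (j : ℕ) ∧ (j : ℕ) + 1 < a j),
          ((a j : ℤ) - ((j : ℕ) + 1))))

/-- The set `Δ_{d,k}` of tuples of positive integers, as a finite set of functions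
`Fin d → ℕ` (all entries automatically lie in `{1,…,d}`). -/
noncomputable def DeltaSet (d k : ℕ) : Finset (Fin d → ℕ) :=
  @Finset.filter _ (memDelta d k) (Classical.decPred _)
    (Fintype.piFinset fun _ : Fin d => Finset.Icc 1 d)

/-- `sgn(a) = (−1)^{#{i : a_i > i}}`. -/
def sgnDelta {d : ℕ} (a : Fin d → ℕ) : ℤ :=
  (-1) ^ (Finset.univ.filter fun i : Fin d => (i : ℕ) + 1 < a i).card

/-- The sum `Σ_{j > i, a_j > j} (a_j − j)` that occurs in the definition of `Δ_{d,k}`, at the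
zero-based position `i`. -/
def excess {d : ℕ} (a : Fin d → ℕ) (i : ℕ) : ℤ :=
  ∑ j : Fin d, if i < (j : ℕ) ∧ (j : ℕ) + 1 < a j then (a j : ℤ) - ((j : ℕ) + 1) else 0

lemma mem_DeltaSet {d k : ℕ} {a : Fin d → ℕ} :
    a ∈ DeltaSet d k ↔ (∀ i, 1 ≤ a i ∧ a i ≤ d) ∧
      (∀ i : Fin d, (i : ℕ) + 1 = k → a i = k) ∧
      (∀ i : Fin d, k < (i : ℕ) + 1 → a i < (i : ℕ) + 1) ∧
      (∀ i : Fin d, (i : ℕ) + 1 < k →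
        (a i < (i : ℕ) + 1 ∨ (a i : ℤ) = (k : ℤ) - excess a i)) := by
  simp only [DeltaSet, memDelta, excess, Finset.mem_filter, Fintype.mem_piFinset, Finset.mem_Icc,
    Finset.sum_filter]

lemma excess_nonneg {d : ℕ} (a : Fin d → ℕ) (i : ℕ) : 0 ≤ excess a i := by
  refine Finset.sum_nonneg fun j _ => ?_
  split_ifs with h <;> omega

lemma excess_eq_zero {d : ℕ} {a : Fin d → ℕ} {i : ℕ}
    (h : ∀ j : Fin d, i < (j : ℕ) → a j ≤ (j : ℕ) + 1) : excess a i = 0 := by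
  refine Finset.sum_eq_zero fun j _ => if_neg fun hj => ?_
  have := h j hj.1
  omega

lemma excess_snoc {d : ℕ} (b : Fin d → ℕ) {t : ℕ} (ht : t ≤ d + 1) (i : ℕ) :
    excess (Fin.snoc b t : Fin (d + 1) → ℕ) i = excess b i := by
  simp only [excess, Fin.sum_univ_castSucc, Fin.snoc_castSucc, Fin.snoc_last, Fin.val_castSucc,
    Fin.val_last]
  rw [if_neg (by omega), add_zero]

/-- Raising the entry `κ+1` at the zero-based position `κ` to `t` increases the sums at all earlier
positions by the same amount. -/
lemma excess_update {d : ℕ} {b : Fin d → ℕ} {κ : Fin d} {t : ℕ} (hb : b κ = (κ : ℕ) + 1)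
    (ht : (κ : ℕ) + 1 ≤ t) {i : ℕ} (hi : i < (κ : ℕ)) :
    excess (Function.update b κ t) i = excess b i + ((t : ℤ) - ((κ : ℕ) + 1)) := by
  unfold excess
  rw [← Finset.add_sum_erase _ _ (Finset.mem_univ κ),
    ← Finset.add_sum_erase (a := κ) Finset.univ _ (Finset.mem_univ κ)]
  have h : ∀ j ∈ Finset.univ.erase κ, Function.update b κ t j = b j := fun j hj =>
    Function.update_of_ne (Finset.ne_of_mem_erase hj) _ _
  rw [Finset.sum_congr rfl fun j hj => by rw [h j hj]]
  simp only [Function.update_self, hb, hi, true_and, lt_irrefl, if_false]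
  split_ifs <;> omega

lemma sgnDelta_eq_prod {d : ℕ} (a : Fin d → ℕ) :
    sgnDelta a = ∏ i : Fin d, if (i : ℕ) + 1 < a i then (-1 : ℤ) else 1 := by
  rw [sgnDelta, Finset.prod_ite]
  simp

/-- The signed monomial `sgn(a) · ∏_{i ≠ k} e_i(a_i)`, with the number `ρ_i(v_j)` abstracted to
`e i j`. -/
def deltaTerm (e : ℕ → ℕ → ℤ) {d : ℕ} (k : ℕ) (a : Fin d → ℕ) : ℤ :=
  sgnDelta a * ∏ i ∈ Finset.univ.filter (fun i : Fin d => (i : ℕ) + 1 ≠ k), e ((i : ℕ) + 1) (a i)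

/-- The coefficient `c_{d,k} = Σ_{a ∈ Δ_{d,k}} sgn(a) · ∏_{i ≠ k} e_i(a_i)`. -/
noncomputable def bracketCoeff (e : ℕ → ℕ → ℤ) (d k : ℕ) : ℤ :=
  ∑ a ∈ DeltaSet d k, deltaTerm e k a

lemma deltaTerm_eq_prod (e : ℕ → ℕ → ℤ) {d : ℕ} (k : ℕ) (a : Fin d → ℕ) :
    deltaTerm e k a = ∏ i : Fin d, (if (i : ℕ) + 1 < a i then (-1 : ℤ) else 1) *
      (if (i : ℕ) + 1 ≠ k then e ((i : ℕ) + 1) (a i) else 1) := by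
  rw [deltaTerm, sgnDelta_eq_prod, Finset.prod_filter, Finset.prod_mul_distrib]

lemma deltaTerm_snoc (e : ℕ → ℕ → ℤ) {d k t : ℕ} (hk : k ≤ d) (ht : t ≤ d) (b : Fin d → ℕ) :
    deltaTerm e k (Fin.snoc b t : Fin (d + 1) → ℕ) = deltaTerm e k b * e (d + 1) t := by
  simp only [deltaTerm_eq_prod, Fin.prod_univ_castSucc, Fin.snoc_castSucc, Fin.snoc_last,
    Fin.val_castSucc, Fin.val_last]
  rw [if_neg (by omega), if_pos (by omega), one_mul]

lemma snoc_mem_DeltaSet {d k t : ℕ} (hk : k ≤ d) (b : Fin d → ℕ) :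
    (Fin.snoc b t : Fin (d + 1) → ℕ) ∈ DeltaSet (d + 1) k ↔
      b ∈ DeltaSet d k ∧ t ∈ Finset.Icc 1 d := by
  simp only [mem_DeltaSet, Fin.forall_fin_succ', Fin.snoc_castSucc, Fin.snoc_last,
    Fin.val_castSucc, Fin.val_last, Finset.mem_Icc]
  constructor
  · rintro ⟨⟨h1, h2⟩, ⟨h3, -⟩, ⟨h4, h5⟩, h6, -⟩
    have h5 := h5 (by omega)
    simp only [excess_snoc b h5.le] at h6
    refine ⟨⟨fun i => ⟨(h1 i).1, ?_⟩, h3, h4, h6⟩, by omega⟩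
    -- the bound `d + 1` on the entries improves to `d`, since a large entry is at most `k ≤ d`
    have := excess_nonneg b i
    rcases lt_trichotomy ((i : ℕ) + 1) k with h | h | h
    · rcases h6 i h with h' | h' <;> omega
    · have := h3 i h
      omega
    · have := h4 i h
      omega
  · rintro ⟨⟨h1, h3, h4, h6⟩, h5⟩
    simp only [excess_snoc b (show t ≤ d + 1 by omega)]
    refine ⟨⟨fun i => ⟨(h1 i).1, (h1 i).2.trans d.le_succ⟩, by omega⟩, ⟨h3, by omega⟩,
      ⟨h4, by omega⟩, h6, by omega⟩

lemma bracketCoeff_castSucc (e : ℕ → ℕ → ℤ) {d k : ℕ} (hk : k ≤ d) :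
    bracketCoeff e (d + 1) k = (∑ t ∈ Finset.Icc 1 d, e (d + 1) t) * bracketCoeff e d k := by
  rw [mul_comm, bracketCoeff, bracketCoeff, Finset.sum_mul_sum, ← Finset.sum_product']
  symm
  refine Finset.sum_bij (fun p _ => (Fin.snoc p.1 p.2 : Fin (d + 1) → ℕ)) ?_ ?_ ?_ ?_
  · rintro ⟨b, t⟩ h
    exact (snoc_mem_DeltaSet hk b).2 (Finset.mem_product.1 h)
  · rintro ⟨b, t⟩ - ⟨b', t'⟩ - h
    have := Fin.snoc_inj.1 h
    simpa using this
  · intro a ha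
    rw [← Fin.snoc_init_self a, snoc_mem_DeltaSet hk] at ha
    exact ⟨(Fin.init a, a (Fin.last d)), Finset.mem_product.2 ha, Fin.snoc_init_self a⟩
  · rintro ⟨b, t⟩ h
    have ht := (Finset.mem_Icc.1 (Finset.mem_product.1 h).2).2
    exact (deltaTerm_snoc e hk ht b).symm

/-- The tuple of length `d+1` obtained from `b` by replacing the entry at the zero-based position
`κ` by `d+1` and appending `d+1`. -/
def raise {d : ℕ} (κ : Fin d) (b : Fin d → ℕ) : Fin (d + 1) → ℕ :=
  Fin.snoc (Function.update b κ (d + 1)) (d + 1)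

lemma raise_mem_DeltaSet {d : ℕ} {κ : Fin d} {b : Fin d → ℕ} (hb : b ∈ DeltaSet d ((κ : ℕ) + 1)) :
    raise κ b ∈ DeltaSet (d + 1) (d + 1) := by
  rw [mem_DeltaSet] at hb
  obtain ⟨h1, h2, h3, h4⟩ := hb
  have hκ := κ.isLt
  simp only [raise, mem_DeltaSet, Fin.forall_fin_succ', Fin.snoc_castSucc, Fin.snoc_last,
    Fin.val_castSucc, Fin.val_last, excess_snoc _ le_rfl]
  refine ⟨⟨fun i => ?_, by omega⟩, ⟨fun i hi => by omega, fun _ => trivial⟩,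
    ⟨fun i hi => by omega, fun h => absurd h (lt_irrefl _)⟩, fun i hi => ?_,
      fun h => absurd h (lt_irrefl _)⟩
  · by_cases hi : i = κ
    · subst hi
      simp
    · rw [Function.update_of_ne hi]
      have := h1 i
      omega
  · rcases lt_trichotomy i κ with h | h | h
    · rw [Function.update_of_ne h.ne, excess_update (h2 κ rfl) (by omega) h]
      have h' := h4 i (by simpa using h)
      push_cast at h' ⊢
      omega
    · subst h
      right
      rw [excess_eq_zero, Function.update_self]
      · simp
      · intro j hj
        rw [Function.update_of_ne (Fin.ne_of_gt hj)]
        exact (h3 j (by omega)).le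
    · rw [Function.update_of_ne h.ne']
      exact Or.inl (h3 i (by simpa using h))

lemma raise_index_not_lt {d : ℕ} {κ κ' : Fin d} {b b' : Fin d → ℕ}
    (hb : b ∈ DeltaSet d ((κ : ℕ) + 1)) (h : raise κ b = raise κ' b') : ¬ κ < κ' := by
  intro hlt
  have h1 := congrFun h κ'.castSucc
  simp only [raise, Fin.snoc_castSucc, Function.update_self, Function.update_of_ne hlt.ne'] at h1
  have h2 := (mem_DeltaSet.1 hb).2.2.1 κ' (by simpa using hlt)
  omega

lemma raise_injective {d : ℕ} {κ κ' : Fin d} {b b' : Fin d → ℕ}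
    (hb : b ∈ DeltaSet d ((κ : ℕ) + 1)) (hb' : b' ∈ DeltaSet d ((κ' : ℕ) + 1))
    (h : raise κ b = raise κ' b') : κ = κ' ∧ b = b' := by
  have hκ : κ = κ' := le_antisymm (not_lt.1 (raise_index_not_lt hb' h.symm))
    (not_lt.1 (raise_index_not_lt hb h))
  subst hκ
  refine ⟨rfl, funext fun i => ?_⟩
  by_cases hi : i = κ
  · subst hi
    rw [(mem_DeltaSet.1 hb).2.1 i rfl, (mem_DeltaSet.1 hb').2.1 i rfl]
  · have h1 := congrFun h i.castSucc
    simpa only [raise, Fin.snoc_castSucc, Function.update_of_ne hi] using h1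

lemma raise_surjective {d : ℕ} (hd : 1 ≤ d) {a : Fin (d + 1) → ℕ}
    (ha : a ∈ DeltaSet (d + 1) (d + 1)) :
    ∃ κ : Fin d, ∃ b ∈ DeltaSet d ((κ : ℕ) + 1), raise κ b = a := by
  obtain ⟨c, t, rfl⟩ : ∃ (c : Fin d → ℕ) (t : ℕ), (Fin.snoc c t : Fin (d + 1) → ℕ) = a :=
    ⟨_, _, Fin.snoc_init_self a⟩
  simp only [mem_DeltaSet, Fin.forall_fin_succ', Fin.snoc_castSucc, Fin.snoc_last,
    Fin.val_castSucc, Fin.val_last] at ha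
  obtain ⟨⟨h1, -⟩, ⟨-, h2⟩, -, h3, -⟩ := ha
  have ht : t = d + 1 := h2 trivial
  subst ht
  simp only [excess_snoc _ le_rfl] at h3
  -- the first position always fails `a_i < i`, since the entries are positive
  have hne : (Finset.univ.filter fun i : Fin d => ¬ c i < (i : ℕ) + 1).Nonempty := by
    refine ⟨⟨0, hd⟩, ?_⟩
    have := (h1 ⟨0, hd⟩).1
    simp only [Finset.mem_filter, Finset.mem_univ, true_and]
    omega
  obtain ⟨κ, hκ, hmax⟩ := Finset.exists_max_image _ id hne
  simp only [Finset.mem_filter, Finset.mem_univ, true_and, id] at hκ hmax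
  have hlt : ∀ j : Fin d, (κ : ℕ) < j → c j < (j : ℕ) + 1 := fun j hj => by
    by_contra hcon
    exact absurd (hmax j hcon) (not_le.2 hj)
  have hκd := κ.isLt
  have hcκ : c κ = d + 1 := by
    have := (h3 κ (by omega)).resolve_left hκ
    rw [excess_eq_zero fun j hj => (hlt j hj).le] at this
    omega
  set b := Function.update c κ ((κ : ℕ) + 1) with hbdef
  have hbκ : b κ = (κ : ℕ) + 1 := Function.update_self ..
  have hcb : Function.update b κ (d + 1) = c := by
    rw [hbdef, Function.update_idem, ← hcκ, Function.update_eq_self]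
  have hb : ∀ j, j ≠ κ → b j = c j := fun j hj => Function.update_of_ne hj ..
  have hlow : ∀ i : Fin d, (i : ℕ) < κ →
      b i < (i : ℕ) + 1 ∨ (b i : ℤ) = ((κ : ℕ) + 1 : ℕ) - excess b i := by
    intro i hi
    have h := h3 i (by omega)
    have he := excess_update hbκ (t := d + 1) (by omega) hi
    rw [hcb] at he
    rw [hb i (Fin.ne_of_lt hi)]
    push_cast at h he ⊢
    omega
  refine ⟨κ, b, mem_DeltaSet.2 ⟨fun i => ?_, fun i hi => ?_, fun i hi => ?_, fun i hi => ?_⟩, ?_⟩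
  · have hpos := (h1 i).1
    have := excess_nonneg b i
    rcases lt_trichotomy i κ with h | h | h
    · have h' := hlow i h
      rw [hb i h.ne] at h' ⊢
      omega
    · subst h
      omega
    · rw [hb i h.ne']
      have := hlt i h
      omega
  · have : i = κ := Fin.ext (by omega)
    rw [this, hbκ]
  · rw [hb i (Fin.ne_of_gt (by omega))]
    exact hlt i (by omega)
  · exact hlow i (by omega)
  · rw [raise, hcb]

lemma deltaTerm_raise (e : ℕ → ℕ → ℤ) {d : ℕ} {κ : Fin d} {b : Fin d → ℕ}
    (hb : b κ = (κ : ℕ) + 1) :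
    deltaTerm e (d + 1) (raise κ b) =
      -(e ((κ : ℕ) + 1) (d + 1) * deltaTerm e ((κ : ℕ) + 1) b) := by
  have hκ := κ.isLt
  simp only [deltaTerm_eq_prod, raise, Fin.prod_univ_castSucc, Fin.snoc_castSucc, Fin.snoc_last,
    Fin.val_castSucc, Fin.val_last]
  rw [← Finset.mul_prod_erase _ _ (Finset.mem_univ κ),
    ← Finset.mul_prod_erase (a := κ) Finset.univ _ (Finset.mem_univ κ)]
  -- away from `κ` the factors agree
  have h : ∀ i ∈ Finset.univ.erase κ,
      (if (i : ℕ) + 1 < Function.update b κ (d + 1) i then (-1 : ℤ) else 1) *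
        (if (i : ℕ) + 1 ≠ d + 1 then e ((i : ℕ) + 1) (Function.update b κ (d + 1) i) else 1) =
      (if (i : ℕ) + 1 < b i then (-1 : ℤ) else 1) *
        (if (i : ℕ) + 1 ≠ (κ : ℕ) + 1 then e ((i : ℕ) + 1) (b i) else 1) := by
    intro i hi
    have hne := Finset.ne_of_mem_erase hi
    have hne' : (i : ℕ) ≠ κ := fun h => hne (Fin.ext h)
    rw [Function.update_of_ne hne, if_pos (show (i : ℕ) + 1 ≠ d + 1 by omega),
      if_pos (show (i : ℕ) + 1 ≠ (κ : ℕ) + 1 by omega)]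
  rw [Finset.prod_congr rfl h, Function.update_self, hb, if_pos (show (κ : ℕ) + 1 < d + 1 by omega),
    if_pos (show (κ : ℕ) + 1 ≠ d + 1 by omega)]
  simp

lemma bracketCoeff_last (e : ℕ → ℕ → ℤ) {d : ℕ} (hd : 1 ≤ d) :
    bracketCoeff e (d + 1) (d + 1) =
      -∑ k ∈ Finset.Icc 1 d, e k (d + 1) * bracketCoeff e d k := by
  have hIcc : ∑ k ∈ Finset.Icc 1 d, e k (d + 1) * bracketCoeff e d k =
      ∑ κ : Fin d, e ((κ : ℕ) + 1) (d + 1) * bracketCoeff e d ((κ : ℕ) + 1) := by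
    rw [Fin.sum_univ_eq_sum_range (fun k => e (k + 1) (d + 1) * bracketCoeff e d (k + 1)) d,
      Finset.range_eq_Ico, Finset.sum_Ico_add' (fun k => e k (d + 1) * bracketCoeff e d k) 0 d 1]
    rfl
  rw [hIcc, ← Finset.sum_neg_distrib]
  simp only [bracketCoeff, Finset.mul_sum, ← Finset.sum_neg_distrib]
  rw [Finset.sum_sigma']
  symm
  refine Finset.sum_bij (fun p _ => raise p.1 p.2) ?_ ?_ ?_ ?_
  · rintro ⟨κ, b⟩ h
    exact raise_mem_DeltaSet (Finset.mem_sigma.1 h).2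
  · rintro ⟨κ, b⟩ h ⟨κ', b'⟩ h' heq
    obtain ⟨rfl, rfl⟩ := raise_injective (Finset.mem_sigma.1 h).2 (Finset.mem_sigma.1 h').2 heq
    rfl
  · intro a ha
    obtain ⟨κ, b, hb, rfl⟩ := raise_surjective hd ha
    exact ⟨⟨κ, b⟩, Finset.mem_sigma.2 ⟨Finset.mem_univ _, hb⟩, rfl⟩
  · rintro ⟨κ, b⟩ h
    exact (deltaTerm_raise e ((mem_DeltaSet.1 (Finset.mem_sigma.1 h).2).2.1 κ rfl)).symm

lemma bracketCoeff_one (e : ℕ → ℕ → ℤ) : bracketCoeff e 1 1 = 1 := by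
  have h : DeltaSet 1 1 = {fun _ => 1} := by
    ext a
    simp only [mem_DeltaSet, Finset.mem_singleton, funext_iff, Fin.forall_fin_one]
    simp only [Fin.val_zero]
    omega
  rw [bracketCoeff, h, Finset.sum_singleton, deltaTerm_eq_prod]
  simp

lemma combBracket_single_left (ev : R → M →+ ℤ) (p : R × M) (y : (R × M) →₀ K) :
    combBracket ev (Finsupp.single p 1) y =
      Finsupp.linearCombination K (combBaseBracket ev p) y := by
  rw [combBracket, Finsupp.sum_single_index (by simp), Finsupp.linearCombination_apply]
  simp only [one_mul]

/-- The formula in terms of `bracketCoeff`. -/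
lemma nestBracket_eq_sum (ev : R → M →+ ℤ) (ρ : ℕ → R) (v : ℕ → M) (n : ℕ) :
    nestBracket ev n
        (fun i : Fin (n + 1) => Finsupp.single (ρ ((i : ℕ) + 1), v ((i : ℕ) + 1)) (1 : K))
      = ∑ k ∈ Finset.Icc 1 (n + 1), bracketCoeff (fun i j => ev (ρ i) (v j)) (n + 1) k •
            Finsupp.single (ρ k, ∑ i ∈ Finset.Icc 1 (n + 1), v i) (1 : K) := by
  induction n with
  | zero => simp [nestBracket, bracketCoeff_one]
  | succ n ih =>
    simp only [nestBracket, Fin.val_castSucc, Fin.val_last]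
    rw [ih, combBracket_single_left, map_sum]
    simp only [map_zsmul, Finsupp.linearCombination_single, one_smul, combBaseBracket]
    rw [Finset.sum_Icc_succ_top (b := n + 1) (by omega) (fun k => bracketCoeff _ (n + 1 + 1) k • _),
      bracketCoeff_last _ (by omega), neg_smul, Finset.sum_smul, ← sub_eq_add_neg,
      ← Finset.sum_sub_distrib]
    refine Finset.sum_congr rfl fun k hk => ?_
    rw [bracketCoeff_castSucc _ (Finset.mem_Icc.1 hk).2,
      Finset.sum_Icc_succ_top (b := n + 1) (by omega) v,
      add_comm (v _), ← map_sum, smul_sub, Int.cast_smul_eq_zsmul, Int.cast_smul_eq_zsmul,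
      smul_smul, smul_smul, mul_comm, mul_comm (bracketCoeff _ _ _)]

/-- Proposition 5.18: the iterated bracket formula. Here `m = n + 1 ≥ 1`, and the data
`ρ_1,…,ρ_m` and `v_1,…,v_m` are given by `ρ, v` on the paper-indices `1,…,m`. -/
theorem iterated_bracket_formula (ev : R → M →+ ℤ) (n : ℕ) (ρ : ℕ → R) (v : ℕ → M) :
    nestBracket ev n
        (fun i : Fin (n + 1) => Finsupp.single (ρ ((i : ℕ) + 1), v ((i : ℕ) + 1)) (1 : K))
      = ∑ k ∈ Finset.Icc 1 (n + 1),
          (∑ a ∈ DeltaSet (n + 1) k, sgnDelta a *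
              ∏ i ∈ Finset.univ.filter (fun i : Fin (n + 1) => (i : ℕ) + 1 ≠ k),
                ev (ρ ((i : ℕ) + 1)) (v (a i))) •
            Finsupp.single (ρ k, ∑ i ∈ Finset.Icc 1 (n + 1), v i) (1 : K) := by
  exact nestBracket_eq_sum ev ρ v n
end

section
/- Let m ≥ 2 and 1 ≤ k ≤ m−1, let A be a commutative ring, and let c_{i,j} ∈ A be arbitrary elements for 1 ≤ i ≤ m and 1 ≤ j ≤ m−1. Then Σ_{a ∈ Δ_{m−1,k}} Σ_{j=1}^{m−1} sgn(a) · (∏_{1 ≤ i ≤ m−1, i ≠ k} c_{i,a_i}) · c_{m,j} = Σ_{a ∈ Δ_{m,k}} sgn(a) · ∏_{1 ≤ i ≤ m, i ≠ k} c_{i,a_i} (every index a_i occurring on the right-hand side satisfies a_i ≤ m−1, so both sides are defined). -/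
theorem memDelta_snoc_iff {n k : ℕ} (hk : k ≤ n + 1) (a : Fin (n + 1) → ℕ) (j : ℕ) :
    memDelta (n + 2) k (Fin.snoc (α := fun _ => ℕ) a j) ↔ memDelta (n + 1) k a ∧ j < n + 2 := by
  have h1 : ¬ n + 1 + 1 = k := by omega
  have h2 : k < n + 1 + 1 := by omega
  have h3 : ¬ n + 1 + 1 < k := by omega
  unfold memDelta
  simp only [Fin.forall_fin_succ' (n := n + 1), Finset.sum_filter,
    Fin.sum_univ_castSucc (n := n + 1), Fin.snoc_castSucc, Fin.snoc_last, Fin.val_castSucc,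
    Fin.val_last, h1, h2, h3, false_imp_iff, true_imp_iff, and_true]
  constructor
  · rintro ⟨p, ⟨q, hj⟩, r⟩
    have hj' : ¬ n + 1 + 1 < j := by omega
    simp only [hj', and_false, if_false, add_zero] at r
    exact ⟨⟨p, q, r⟩, hj⟩
  · rintro ⟨⟨p, q, r⟩, hj⟩
    have hj' : ¬ n + 1 + 1 < j := by omega
    simp only [hj', and_false, if_false, add_zero]
    exact ⟨p, ⟨q, hj⟩, r⟩

/-- The entries of a tuple in `Δ_{d,k}` never exceed their index or `k`, whichever is larger. -/
theorem memDelta.le_max {d k : ℕ} {a : Fin d → ℕ} (h : memDelta d k a) (i : Fin d) :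
    a i ≤ max ((i : ℕ) + 1) k := by
  obtain ⟨h1, h2, h3⟩ := h
  rcases lt_trichotomy ((i : ℕ) + 1) k with hi | hi | hi
  · rcases h3 i hi with h | h
    · omega
    · have : 0 ≤ ∑ j ∈ Finset.univ.filter
            (fun j : Fin d => (i : ℕ) < (j : ℕ) ∧ (j : ℕ) + 1 < a j),
          ((a j : ℤ) - ((j : ℕ) + 1)) := by
        refine Finset.sum_nonneg fun j hj => ?_
        have := (Finset.mem_filter.1 hj).2.2
        omega
      omega
  · have := h1 i hi
    omega
  · have := h2 i hi
    omega

/-- The bound `k ≤ n + 1` keeps the first `n + 1` entries in `{1, …, n + 1}`, although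
`DeltaSet (n + 2) k` only asks for `{1, …, n + 2}`. -/
theorem mem_DeltaSet_snoc_iff {n k : ℕ} (hk : k ≤ n + 1) (a : Fin (n + 1) → ℕ) (j : ℕ) :
    (Fin.snoc (α := fun _ => ℕ) a j : Fin (n + 2) → ℕ) ∈ DeltaSet (n + 2) k ↔
      a ∈ DeltaSet (n + 1) k ∧ j ∈ Finset.Icc 1 (n + 1) := by
  simp only [DeltaSet, Finset.mem_filter, Fintype.mem_piFinset, Finset.mem_Icc,
    memDelta_snoc_iff hk, Fin.forall_fin_succ' (n := n + 1), Fin.snoc_castSucc, Fin.snoc_last]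
  constructor
  · rintro ⟨⟨ha, hj⟩, hm, hj'⟩
    refine ⟨⟨fun i => ⟨(ha i).1, ?_⟩, hm⟩, by omega⟩
    have := hm.le_max i
    omega
  · rintro ⟨⟨ha, hm⟩, hj⟩
    exact ⟨⟨fun i => ⟨(ha i).1, (ha i).2.trans (by omega)⟩, by omega⟩, hm, by omega⟩

theorem sgnDelta_snoc {n : ℕ} (a : Fin (n + 1) → ℕ) {j : ℕ} (hj : j ≤ n + 1) :
    sgnDelta (Fin.snoc (α := fun _ => ℕ) a j : Fin (n + 2) → ℕ) = sgnDelta a := by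
  have h : ¬ n + 1 + 1 < j := by omega
  unfold sgnDelta
  simp only [Finset.card_filter, Fin.sum_univ_castSucc (n := n + 1), Fin.snoc_castSucc,
    Fin.snoc_last, Fin.val_castSucc, Fin.val_last, h, if_false, add_zero]

theorem delta_identity_one {A : Type*} [CommRing A] (n : ℕ) (k : ℕ)
    (hk1 : 1 ≤ k) (hk2 : k ≤ n + 1) (c : ℕ → ℕ → A) :
    ∑ a ∈ DeltaSet (n + 1) k, ∑ j ∈ Finset.Icc 1 (n + 1),
        ((sgnDelta a : ℤ) : A) *
            (∏ i ∈ Finset.univ.filter (fun i : Fin (n + 1) => (i : ℕ) + 1 ≠ k),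
              c ((i : ℕ) + 1) (a i)) * c (n + 2) j
      = ∑ a ∈ DeltaSet (n + 2) k,
          ((sgnDelta a : ℤ) : A) *
            ∏ i ∈ Finset.univ.filter (fun i : Fin (n + 2) => (i : ℕ) + 1 ≠ k),
              c ((i : ℕ) + 1) (a i) := by
  rw [← Finset.sum_product']
  refine Finset.sum_bij' (fun p _ => Fin.snoc (α := fun _ => ℕ) p.1 p.2)
    (fun b _ => (Fin.init b, b (Fin.last (n + 1)))) ?_ ?_ ?_ ?_ ?_
  · rintro ⟨a, j⟩ h
    exact (mem_DeltaSet_snoc_iff hk2 a j).2 (Finset.mem_product.1 h)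
  · intro b hb
    rw [← Fin.snoc_init_self b] at hb
    exact Finset.mem_product.2 ((mem_DeltaSet_snoc_iff hk2 _ _).1 hb)
  · rintro ⟨a, j⟩ _
    simp only [Fin.init_snoc, Fin.snoc_last]
  · intro b _
    exact Fin.snoc_init_self b
  · rintro ⟨a, j⟩ h
    have hj := (Finset.mem_Icc.1 (Finset.mem_product.1 h).2).2
    have h1 : n + 1 + 1 ≠ k := by omega
    simp only [sgnDelta_snoc a hj, Finset.prod_filter, Fin.prod_univ_castSucc (n := n + 1),
      Fin.snoc_castSucc, Fin.snoc_last, Fin.val_castSucc, Fin.val_last, h1, ne_eq,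
      not_false_eq_true, if_true, mul_assoc]
end

section
/- Let R be an associative ring with 1 and let A, B, C ∈ Rˣ be units. Set W := (A·B·C : R) − 1 and suppose that W·((U : R) − 1) = 0 and ((U : R) − 1)·W = 0 for each U ∈ {A, B}. Then (B·C·A : R) = (A·B·C : R) and (C·A·B : R) = (A·B·C : R). -/
/-- Two units whose defects from `1` annihilate each other on both sides commute, because
`P * U - U * P = (P - 1) * (U - 1) - (U - 1) * (P - 1)`. -/
lemma commute_of_defects_annihilate {R : Type*} [Ring R] (P U : Rˣ)
    (h₁ : ((P : R) - 1) * ((U : R) - 1) = 0) (h₂ : ((U : R) - 1) * ((P : R) - 1) = 0) :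
    P * U = U * P := by
  ext
  push_cast
  have h := h₁.trans h₂.symm
  rw [← sub_eq_zero] at h ⊢
  rw [← h]
  noncomm_ring

theorem units_cyclic_of_defect_annihilates {R : Type*} [Ring R] (A B C : Rˣ)
    (hA₁ : (((A * B * C : Rˣ) : R) - 1) * ((A : R) - 1) = 0)
    (hA₂ : ((A : R) - 1) * (((A * B * C : Rˣ) : R) - 1) = 0)
    (hB₁ : (((A * B * C : Rˣ) : R) - 1) * ((B : R) - 1) = 0)
    (hB₂ : ((B : R) - 1) * (((A * B * C : Rˣ) : R) - 1) = 0) :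
    ((B * C * A : Rˣ) : R) = ((A * B * C : Rˣ) : R) ∧
    ((C * A * B : Rˣ) : R) = ((A * B * C : Rˣ) : R) := by
  have hA := commute_of_defects_annihilate _ A hA₁ hA₂
  have hB := commute_of_defects_annihilate _ B hB₁ hB₂
  -- `B * C * A` and `C * A * B` are the conjugates of `A * B * C` by `A` and by `A * B`.
  constructor
  · congr 1
    apply mul_left_cancel (a := A)
    rw [← hA]
    group
  · congr 1
    apply mul_left_cancel (a := A * B)
    calc A * B * (C * A * B) = A * B * C * A * B := by group
      _ = A * (A * B * C * B) := by rw [hA]; group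
      _ = A * B * (A * B * C) := by rw [hB]; group
end

section
/- Let R be an associative ring with 1, ι a type, and u : ι → ι → Rˣ a family of units with u_{ii} = 1 and u_{ji} = (u_{ij})⁻¹ for all i, j. For all i, j, k set c_{ijk} := ((u_{jk}·(u_{ik})⁻¹·u_{ij} : Rˣ) : R) − 1, and assume that c_{ijk}·((u_{ab} : R) − 1) = 0 and ((u_{ab} : R) − 1)·c_{ijk} = 0 for all indices i, j, k, a, b. Then: (a) (cocycle condition) −c_{ijk} + c_{ijl} − c_{ikl} + c_{jkl} = 0 for all i, j, k, l; and (b) (alternating) c_{iik} = 0, c_{ijk} = −c_{jik}, and c_{ijk} = −c_{ikj} for all i, j, k. -/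
/-!
Since `c i j k` annihilates every `u a b - 1`, multiplying it by any `u a b` on either side does
nothing. The definition of the defect therefore becomes the additive relation
`u j k * u k i = u j i + c i j k`. Multiplying this relation by one further unit gives
`c i j k = -c i k j` and the cyclic symmetry `c j i k = c k j i`, which together make `c`
alternating; comparing the two bracketings of `u l k * u k j * u j i` gives the cocycle condition.
-/

/-!
Multiplicative translation of Lemma 2.11(i): for an alternating family of units
`u : ι → ι → Rˣ` (i.e. `u i i = 1`, `u j i = (u i j)⁻¹`) whose defects
`c i j k = u j k · (u i k)⁻¹ · u i j − 1` annihilate every `u a b − 1` on both sides,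
the defect is an alternating 2-cocycle.
-/

theorem defect_is_alternating_cocycle {R : Type*} [Ring R] {ι : Type*}
    (u : ι → ι → Rˣ)
    (hrefl : ∀ i, u i i = 1)
    (hsymm : ∀ i j, u j i = (u i j)⁻¹)
    (c : ι → ι → ι → R)
    (hc : ∀ i j k, c i j k = ((u j k * (u i k)⁻¹ * u i j : Rˣ) : R) - 1)
    (hann₁ : ∀ i j k a b, c i j k * ((u a b : R) - 1) = 0)
    (hann₂ : ∀ i j k a b, ((u a b : R) - 1) * c i j k = 0) :
    -- (a) cocycle condition
    (∀ i j k l, -c i j k + c i j l - c i k l + c j k l = 0) ∧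
    -- (b) alternating
    (∀ i k, c i i k = 0) ∧
    (∀ i j k, c i j k = -c j i k) ∧
    (∀ i j k, c i j k = -c i k j) := by
  have hr : ∀ i j k a b, c i j k * (u a b : R) = c i j k := fun i j k a b => by
    simpa [mul_sub, sub_eq_zero] using hann₁ i j k a b
  have hl : ∀ i j k a b, (u a b : R) * c i j k = c i j k := fun i j k a b => by
    simpa [sub_mul, sub_eq_zero] using hann₂ i j k a b
  have hinv : ∀ i j, (u i j : R) * (u j i : R) = 1 := fun i j => by
    rw [hsymm i j, Units.mul_inv]
  have hmul : ∀ i j k, (u j k : R) * (u k i : R) = (u j i : R) + c i j k := fun i j k => by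
    have h : (u j k : R) * u k i * u i j = 1 + c i j k := by
      rw [hc, ← hsymm i k]
      simp
    calc (u j k : R) * u k i = u j k * u k i * (u i j * u j i) := by rw [hinv, mul_one]
      _ = (u j k * u k i * u i j) * u j i := by simp only [mul_assoc]
      _ = u j i + c i j k := by rw [h, add_mul, one_mul, hr]
  have hswap : ∀ i j k, c i j k = -c i k j := fun i j k => by
    -- expand `u j k * (u k j * u j i) = u j i`
    have h : (u j i : R) = u j i + c i j k + c i k j := by
      calc (u j i : R) = u j k * (u k j * u j i) := by rw [← mul_assoc, hinv, one_mul]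
        _ = u j i + c i j k + c i k j := by rw [hmul i k j, mul_add, hl, hmul i j k]
    rw [add_assoc, left_eq_add] at h
    exact eq_neg_of_add_eq_zero_left h
  have hcyc : ∀ i j k, c j i k = c k j i := fun i j k => by
    -- expand `u j i * (u i k * u k j) * u j k` in two ways
    have h : (u j k : R) + c k j i = u j k + c j i k := by
      calc (u j k : R) + c k j i = u j i * u i k := (hmul k j i).symm
        _ = u j i * (u i k * u k j) * u j k := by
          rw [mul_assoc, mul_assoc, hinv, mul_one]
        _ = u j k + c j i k := by
          rw [hmul j i k, mul_add, hinv, hl, add_mul, one_mul, hr]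
    exact (add_left_cancel h).symm
  refine ⟨fun i j k l => ?_, fun i k => ?_, fun i j k => ?_, hswap⟩
  · have h : (u l i : R) + c i l j + c j l k = u l i + c i l k + c i k j := by
      calc (u l i : R) + c i l j + c j l k = (u l k * u k j) * u j i := by
            rw [hmul j l k, add_mul, hr, hmul i l j]
        _ = u l k * (u k j * u j i) := mul_assoc _ _ _
        _ = u l i + c i l k + c i k j := by rw [hmul i k j, mul_add, hl, hmul i l k]
    rw [hswap i l j, hswap j l k, hswap i l k, hswap i k j, add_assoc, add_assoc] at h
    have h' := add_left_cancel h
    rw [← sub_eq_zero] at h'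
    rw [← neg_eq_zero, ← h']
    abel
  · rw [hc, hrefl]
    simp
  · rw [hcyc i j k, hcyc j k i, hswap i j k]
end

section
/- Let R be an associative ring with 1, ι a type, and u : ι → ι → Rˣ a family of units; set c_{ijk} := ((u_{jk}·(u_{ik})⁻¹·u_{ij} : Rˣ) : R) − 1. Let y : ι → ι → R satisfy y_{ij}·((u_{ab} : R) − 1) = 0, ((u_{ab} : R) − 1)·y_{ij} = 0, and y_{ij}·y_{ab} = 0 for all indices. Then each 1 + y_{ij} is a unit of R (with inverse 1 − y_{ij}), and the family u'_{ij} := u_{ij}·(1 + y_{ij}) has defect c'_{ijk} := ((u'_{jk}·(u'_{ik})⁻¹·u'_{ij} : Rˣ) : R) − 1 equal to c_{ijk} + (y_{jk} − y_{ik} + y_{ij}) for all i, j, k. -/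
/-!
Every `u a b`, and hence every inverse `(u a b)⁻¹`, fixes each `y i j` under multiplication on
either side. Therefore `u' = u * (1 + y) = u + y` and `u'⁻¹ = (1 - y) * u⁻¹ = u⁻¹ - y`. In the
expansion of `(u j k + y j k) * ((u i k)⁻¹ - y i k) * (u i j + y i j)`, the terms with at least
two factors `y` vanish and the terms with exactly one reduce to `y j k`, `-y i k` and `y i j`.
-/

theorem defect_of_perturbed_family {R : Type*} [Ring R] {ι : Type*}
    (u : ι → ι → Rˣ)
    (c : ι → ι → ι → R)
    (hc : ∀ i j k, c i j k = ((u j k * (u i k)⁻¹ * u i j : Rˣ) : R) - 1)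
    (y : ι → ι → R)
    (hy₁ : ∀ i j a b, y i j * ((u a b : R) - 1) = 0)
    (hy₂ : ∀ i j a b, ((u a b : R) - 1) * y i j = 0)
    (hy₃ : ∀ i j a b, y i j * y a b = 0) :
    -- each 1 + y i j is a unit with inverse 1 − y i j
    (∀ i j, (1 + y i j) * (1 - y i j) = 1 ∧ (1 - y i j) * (1 + y i j) = 1) ∧
    -- the perturbed family u' i j = u i j · (1 + y i j) has defect c + d(y)
    (∃ u' : ι → ι → Rˣ,
      (∀ i j, (u' i j : R) = (u i j : R) * (1 + y i j)) ∧
      (∀ i j k, ((u' j k * (u' i k)⁻¹ * u' i j : Rˣ) : R) - 1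
          = c i j k + (y j k - y i k + y i j))) := by
  have hr : ∀ i j a b, y i j * (u a b : R) = y i j := fun i j a b => by
    simpa [mul_sub, sub_eq_zero] using hy₁ i j a b
  have hl : ∀ i j a b, (u a b : R) * y i j = y i j := fun i j a b => by
    simpa [sub_mul, sub_eq_zero] using hy₂ i j a b
  have hr' : ∀ i j a b, y i j * (↑(u a b)⁻¹ : R) = y i j := fun i j a b => by
    rw [Units.mul_inv_eq_iff_eq_mul, hr]
  have hl' : ∀ i j a b, (↑(u a b)⁻¹ : R) * y i j = y i j := fun i j a b => by
    rw [Units.inv_mul_eq_iff_eq_mul, hl]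
  have h1 : ∀ i j, (1 + y i j) * (1 - y i j) = 1 ∧ (1 - y i j) * (1 + y i j) = 1 :=
    fun i j => ⟨by simp [mul_sub, add_mul, hy₃], by simp [mul_add, sub_mul, hy₃]⟩
  refine ⟨h1, fun i j => u i j * ⟨1 + y i j, 1 - y i j, (h1 i j).1, (h1 i j).2⟩,
    fun i j => rfl, fun i j k => ?_⟩
  rw [hc]
  simp only [mul_inv_rev, Units.val_mul, Units.inv_mk]
  simp only [mul_add, add_mul, mul_sub, sub_mul, mul_one, one_mul, hl, hr, hl', hr', hy₃,
    mul_assoc _ _ (y i j), zero_mul]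
  abel
end

section
/- Let R be an associative ring with 1, ι a type, u : ι → ι → Rˣ and a : ι → Rˣ families of units, and set c_{ijk} := ((u_{jk}·(u_{ik})⁻¹·u_{ij} : Rˣ) : R) − 1. Assume c_{ijk}·((a_l : R) − 1) = 0 and ((a_l : R) − 1)·c_{ijk} = 0 for all i, j, k, l. Then the conjugated family v_{ij} := a_i·u_{ij}·(a_j)⁻¹ satisfies v_{jk}·(v_{ik})⁻¹·v_{ij} = u_{jk}·(u_{ik})⁻¹·u_{ij} for all i, j, k. -/
theorem defect_gauge_invariant {R : Type*} [Ring R] {ι : Type*}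
    (u : ι → ι → Rˣ) (a : ι → Rˣ)
    (c : ι → ι → ι → R)
    (hc : ∀ i j k, c i j k = ((u j k * (u i k)⁻¹ * u i j : Rˣ) : R) - 1)
    (h₁ : ∀ i j k l, c i j k * ((a l : R) - 1) = 0)
    (h₂ : ∀ i j k l, ((a l : R) - 1) * c i j k = 0)
    (v : ι → ι → Rˣ)
    (hv : ∀ i j, v i j = a i * u i j * (a j)⁻¹) :
    ∀ i j k, v j k * (v i k)⁻¹ * v i j = u j k * (u i k)⁻¹ * u i j := by
  intro i j k
  -- The inner gauge factors telescope, so the product is only conjugated by `a j`.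
  have hconj : v j k * (v i k)⁻¹ * v i j
      = a j * (u j k * (u i k)⁻¹ * u i j) * (a j)⁻¹ := by
    simp only [hv]
    group
  have h₁' := h₁ i j k j
  have h₂' := h₂ i j k j
  rw [hc] at h₁' h₂'
  rw [hconj, mul_inv_eq_iff_eq_mul]
  generalize u j k * (u i k)⁻¹ * u i j = w at h₁' h₂' ⊢
  -- Both `(a j - 1) * (w - 1)` and `(w - 1) * (a j - 1)` vanish, and their difference is the
  -- commutator of `a j` and `w`.
  ext
  push_cast
  rw [← sub_eq_zero]
  calc (a j : R) * w - w * a j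
      = ((a j : R) - 1) * (w - 1) - (w - 1) * ((a j : R) - 1) := by noncomm_ring
    _ = 0 := by rw [h₁', h₂', sub_zero]
end

section
/- Let R be an associative ring with 1, ι a type, and x, y : ι → ι → Rˣ families of units satisfying the multiplicative cocycle conditions x_{ij}·x_{jk} = x_{ik} and y_{ij}·y_{jk} = y_{ik} for all i, j, k. Let a : ι → Rˣ and set v_{ij} := ((a_i·x_{ij}·(a_j)⁻¹·(y_{ij})⁻¹ : Rˣ) : R) − 1. Assume v_{ij}·((y_{ab} : R) − 1) = 0, ((y_{ab} : R) − 1)·v_{ij} = 0, and v_{ij}·v_{ab} = 0 for all indices. Then v_{ij} + v_{jk} = v_{ik} for all i, j, k. -/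
/-!
Multiplicative translation of the key computation in Lemma A.2(i): for multiplicative
cocycles `x`, `y` and a 0-cochain `a`, the defect
`v i j = a i · x i j · (a j)⁻¹ · (y i j)⁻¹ − 1`, assumed to annihilate every
`y a b − 1` on both sides and to have all products `v i j · v a b = 0`, is an additive
Čech 1-cocycle: `v i j + v j k = v i k`.
-/

theorem gauge_defect_is_additive_cocycle {R : Type*} [Ring R] {ι : Type*}
    (x y : ι → ι → Rˣ)
    (hx : ∀ i j k, x i j * x j k = x i k)
    (hy : ∀ i j k, y i j * y j k = y i k)
    (a : ι → Rˣ)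
    (v : ι → ι → R)
    (hv : ∀ i j, v i j = ((a i * x i j * (a j)⁻¹ * (y i j)⁻¹ : Rˣ) : R) - 1)
    (h₁ : ∀ i j p q, v i j * ((y p q : R) - 1) = 0)
    (h₂ : ∀ i j p q, ((y p q : R) - 1) * v i j = 0)
    (h₃ : ∀ i j p q, v i j * v p q = 0) :
    ∀ i j k, v i j + v j k = v i k := by
  have vy : ∀ i j p q, v i j * (y p q : R) = v i j := fun i j p q => by
    simpa [mul_sub, sub_eq_zero] using h₁ i j p q
  have yv : ∀ i j p q, (y p q : R) * v i j = v i j := fun i j p q => by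
    simpa [sub_mul, sub_eq_zero] using h₂ i j p q
  -- The gauge transform of `x` is `(1 + v) y`, which equals `y + v` since `v` absorbs `y`.
  have hz : ∀ i j, ((a i * x i j * (a j)⁻¹ : Rˣ) : R) = y i j + v i j := fun i j => by
    have h : ((a i * x i j * (a j)⁻¹ * (y i j)⁻¹ : Rˣ) : R) = 1 + v i j := by
      rw [hv]; abel
    calc ((a i * x i j * (a j)⁻¹ : Rˣ) : R)
        = ((a i * x i j * (a j)⁻¹ * (y i j)⁻¹ : Rˣ) : R) * y i j := by
          rw [← Units.val_mul, inv_mul_cancel_right]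
      _ = y i j + v i j := by rw [h, add_mul, one_mul, vy]
  intro i j k
  -- The gauge transform of `x` is again a cocycle; expand this relation using `hz`.
  have hc : (a i * x i j * (a j)⁻¹) * (a j * x j k * (a k)⁻¹) = a i * x i k * (a k)⁻¹ := by
    rw [← hx i j k]; group
  have h := congrArg (Units.val) hc
  rw [Units.val_mul, hz, hz, hz, add_mul, mul_add, mul_add, vy, yv, h₃, ← Units.val_mul, hy,
    add_zero, add_assoc] at h
  rw [add_comm]
  exact add_left_cancel h
end

section
/- Let R be an associative ring with 1, ι a type, x, y : ι → ι → Rˣ families of units, and a, b : ι → Rˣ such that a_i·x_{ij}·(a_j)⁻¹ = y_{ij} and b_i·x_{ij}·(b_j)⁻¹ = y_{ij} for all i, j. Set w_i := ((b_i·(a_i)⁻¹ : Rˣ) : R) − 1 and assume w_i·((y_{ab} : R) − 1) = 0 and ((y_{ab} : R) − 1)·w_i = 0 for all indices. Then w_i = w_j for all i, j. -/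
/-!
Put `c i = b i * (a i)⁻¹ = 1 + w i`. Both `c i * y i j` and `y i j * c j` equal
`b i * x i j * (a j)⁻¹`, so `w i * y i j = y i j * w j`. Since `w` annihilates `y i j - 1` on
both sides, the left-hand side is `w i` and the right-hand side is `w j`.
-/

theorem gauge_difference_is_constant {R : Type*} [Ring R] {ι : Type*}
    (x y : ι → ι → Rˣ)
    (a b : ι → Rˣ)
    (ha : ∀ i j, a i * x i j * (a j)⁻¹ = y i j)
    (hb : ∀ i j, b i * x i j * (b j)⁻¹ = y i j)
    (w : ι → R)
    (hw : ∀ i, w i = ((b i * (a i)⁻¹ : Rˣ) : R) - 1)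
    (h₁ : ∀ i p q, w i * ((y p q : R) - 1) = 0)
    (h₂ : ∀ i p q, ((y p q : R) - 1) * w i = 0) :
    ∀ i j, w i = w j := by
  intro i j
  have hc : b i * (a i)⁻¹ * y i j = y i j * (b j * (a j)⁻¹) := by
    calc b i * (a i)⁻¹ * y i j = b i * x i j * (a j)⁻¹ := by rw [← ha]; group
      _ = y i j * (b j * (a j)⁻¹) := by rw [← hb]; group
  have hcR : ((b i * (a i)⁻¹ : Rˣ) : R) * y i j = y i j * ((b j * (a j)⁻¹ : Rˣ) : R) := by
    exact_mod_cast congrArg Units.val hc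
  have hwy : w i * y i j = y i j * w j := by
    rw [hw, hw, sub_mul, mul_sub, hcR, one_mul, mul_one]
  have hl : w i * y i j = w i := by
    simpa [mul_sub, sub_eq_zero] using h₁ i i j
  have hr : y i j * w j = w j := by
    simpa [sub_mul, sub_eq_zero] using h₂ j i j
  rw [← hl, hwy, hr]
end

section
/- Let N and ι be types, F : ι → Set N a family of subsets of N, V ⊆ N a subset, and G an additive abelian group. Call ω : ι → ι → G an admissible cocycle if: ω_{ji} = −ω_{ij} for all i, j; ω_{ij} = 0 whenever V ∩ F_i ∩ F_j = ∅; and ω_{ij} + ω_{jk} = ω_{ik} whenever V ∩ F_i ∩ F_j ∩ F_k ≠ ∅. Say a set D of unordered pairs of elements of ι has the cocycle property if whenever {σ,κ} ∈ D, {τ,κ} ∈ D and F_σ ∩ F_τ ⊆ F_κ, also {σ,τ} ∈ D; let D̄ denote the intersection of all supersets of D having the cocycle property. If D̄ consists of all unordered pairs of elements of ι, then any two admissible cocycles that agree on all pairs in D are equal. -/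
/-!
Abstract form of Proposition 5.21: an admissible Čech 1-cocycle on the closed cover
`{V ∩ F_i}` is determined by its values on a set `D` of (unordered) pairs whose closure
under the cocycle property consists of all pairs of distinct indices.
Unordered pairs are encoded as symmetric sets of ordered pairs.
-/

/-- `ω : ι → ι → G` is an admissible cocycle for the family `F` of subsets of `N` and
the subset `V ⊆ N` if it is antisymmetric, vanishes on pairs with
`V ∩ F i ∩ F j = ∅`, and satisfies the cocycle condition `ω i j + ω j k = ω i k`
whenever `V ∩ F i ∩ F j ∩ F k ≠ ∅`. -/
def IsAdmissibleCocycle {N ι G : Type*} [AddCommGroup G]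
    (F : ι → Set N) (V : Set N) (ω : ι → ι → G) : Prop :=
  (∀ i j, ω j i = -ω i j) ∧
  (∀ i j, V ∩ F i ∩ F j = ∅ → ω i j = 0) ∧
  (∀ i j k, (V ∩ F i ∩ F j ∩ F k).Nonempty → ω i j + ω j k = ω i k)

/-- A set `E` of pairs has the cocycle property if whenever `(σ,κ) ∈ E`, `(τ,κ) ∈ E`
and `F σ ∩ F τ ⊆ F κ`, also `(σ,τ) ∈ E`. -/
def HasCocycleProp {N ι : Type*} (F : ι → Set N) (E : Set (ι × ι)) : Prop :=
  ∀ σ τ κ : ι, (σ, κ) ∈ E → (τ, κ) ∈ E → F σ ∩ F τ ⊆ F κ → (σ, τ) ∈ E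

theorem admissible_cocycle_determined_by_pairs {N ι G : Type*} [AddCommGroup G]
    (F : ι → Set N) (V : Set N)
    (D : Set (ι × ι)) (hDsymm : ∀ i j, (i, j) ∈ D → (j, i) ∈ D)
    -- the closure D̄ of D consists of all (unordered) pairs of distinct elements of ι
    (hclosure : ∀ σ τ : ι, σ ≠ τ →
      (σ, τ) ∈ ⋂₀ {E : Set (ι × ι) | D ⊆ E ∧ HasCocycleProp F E})
    (ω₁ ω₂ : ι → ι → G)
    (h₁ : IsAdmissibleCocycle F V ω₁)
    (h₂ : IsAdmissibleCocycle F V ω₂)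
    (hagree : ∀ p ∈ D, ω₁ p.1 p.2 = ω₂ p.1 p.2) :
    ω₁ = ω₂ := by
  -- A cocycle vanishes on the diagonal, a case the closure hypothesis says nothing about.
  have diag : ∀ ω : ι → ι → G, IsAdmissibleCocycle F V ω → ∀ i, ω i i = 0 := by
    rintro ω ⟨-, hzero, hadd⟩ i
    rcases Set.eq_empty_or_nonempty (V ∩ F i ∩ F i) with h | ⟨x, hx⟩
    · exact hzero i i h
    · exact add_eq_left.mp (hadd i i i ⟨x, hx, hx.2⟩)
  -- The pairs on which the two cocycles agree contain `D` and have the cocycle property: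
  -- if `F σ ∩ F τ ⊆ F κ` and `V` meets `F σ ∩ F τ`, then `ω σ τ = ω σ κ - ω τ κ`.
  have hE : HasCocycleProp F {p : ι × ι | ω₁ p.1 p.2 = ω₂ p.1 p.2} := by
    intro σ τ κ hσ hτ hsub
    simp only [Set.mem_ofPred_eq] at hσ hτ ⊢
    rcases Set.eq_empty_or_nonempty (V ∩ F σ ∩ F τ) with h | ⟨x, hx⟩
    · rw [h₁.2.1 σ τ h, h₂.2.1 σ τ h]
    · have hne : (V ∩ F σ ∩ F τ ∩ F κ).Nonempty := ⟨x, hx, hsub ⟨hx.1.2, hx.2⟩⟩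
      rw [eq_sub_of_add_eq (h₁.2.2 σ τ κ hne), eq_sub_of_add_eq (h₂.2.2 σ τ κ hne), hσ, hτ]
  funext σ τ
  by_cases hne : σ = τ
  · subst hne
    rw [diag ω₁ h₁, diag ω₂ h₂]
  · exact hclosure σ τ hne _ ⟨hagree, hE⟩
end
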